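/- Let d and d_F be positive integers. Let σ : ℝ → ℝ be 1-Lipschitz with σ(0) = 0, applied elementwise to vectors. Define LN : ℝ^d → ℝ^d by LN(x) = x if ‖x‖₂ ≤ 1 and LN(x) = x/‖x‖₂ otherwise, and define the feed-forward map ffn(x, A₁, A₂) = σ(LN(x) A₁) A₂ for x ∈ ℝ^d (viewed as a row vector), A₁ ∈ ℝ^{d×d_F}, A₂ ∈ ℝ^{d_F×d}. Then for any x, x̃ ∈ ℝ^d and any A₁, Ã₁ ∈ ℝ^{d×d_F}, A₂, Ã₂ ∈ ℝ^{d_F×d}: ‖ffn(x, A₁, A₂) − ffn(x̃, Ã₁, Ã₂)‖₂ ≤ ‖A₁‖_F·‖A₂‖_F·‖x − x̃‖₂ + ‖A₁ − Ã₁‖_F·‖A₂‖_F·‖x̃‖₂ + ‖Ã₁‖_F·‖A₂ − Ã₂‖_F·‖x̃‖₂. -/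

import Mathlib

open scoped BigOperators

/-- Euclidean (ℓ₂) norm of a finite real vector. -/
noncomputable def l2norm {n : ℕ} (v : Fin n → ℝ) : ℝ :=
  Real.sqrt (∑ i, v i ^ 2)

/-- Frobenius norm of a real matrix. -/
noncomputable def frobNorm {m n : ℕ} (A : Matrix (Fin m) (Fin n) ℝ) : ℝ :=
  Real.sqrt (∑ i, ∑ j, A i j ^ 2)

/-- Row-wise normalization: projection onto the closed Euclidean unit ball. -/
noncomputable def LN {n : ℕ} (x : Fin n → ℝ) : Fin n → ℝ :=
  if l2norm x ≤ 1 then x else (l2norm x)⁻¹ • x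

/-- The feed-forward map `ffn(x, A₁, A₂) = σ(LN(x) A₁) A₂`, with `x` a row vector
and `σ` applied elementwise. -/
noncomputable def ffn {d dF : ℕ} (σ : ℝ → ℝ) (x : Fin d → ℝ)
    (A₁ : Matrix (Fin d) (Fin dF) ℝ) (A₂ : Matrix (Fin dF) (Fin d) ℝ) :
    Fin d → ℝ :=
  Matrix.vecMul (fun i => σ (Matrix.vecMul (LN x) A₁ i)) A₂

theorem l2norm_eq {n : ℕ} (v : Fin n → ℝ) : l2norm v = ‖WithLp.toLp 2 v‖ := by
  simp [l2norm, EuclideanSpace.norm_eq]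

theorem l2norm_nonneg' {n : ℕ} (v : Fin n → ℝ) : 0 ≤ l2norm v := Real.sqrt_nonneg _

theorem frobNorm_nonneg' {m n : ℕ} (A : Matrix (Fin m) (Fin n) ℝ) : 0 ≤ frobNorm A :=
  Real.sqrt_nonneg _

theorem l2norm_add_le {n : ℕ} (v w : Fin n → ℝ) : l2norm (v + w) ≤ l2norm v + l2norm w := by
  simp only [l2norm_eq, WithLp.toLp_add]
  exact norm_add_le _ _

theorem l2norm_vecMul_le {m n : ℕ} (v : Fin m → ℝ) (A : Matrix (Fin m) (Fin n) ℝ) :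
    l2norm (Matrix.vecMul v A) ≤ l2norm v * frobNorm A := by
  unfold l2norm frobNorm
  rw [← Real.sqrt_mul (Finset.sum_nonneg fun i _ => sq_nonneg _)]
  apply Real.sqrt_le_sqrt
  rw [Finset.sum_comm, Finset.mul_sum]
  apply Finset.sum_le_sum
  intro j _
  exact Finset.sum_mul_sq_le_sq_mul_sq Finset.univ v (fun i => A i j)

theorem l2norm_mono {n : ℕ} (v w : Fin n → ℝ) (h : ∀ i, |v i| ≤ |w i|) :
    l2norm v ≤ l2norm w := by
  apply Real.sqrt_le_sqrt
  exact Finset.sum_le_sum fun i _ => sq_le_sq.2 (h i)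

theorem proj_aux {E : Type*} [NormedAddCommGroup E] [InnerProductSpace ℝ E] (p q : E) (a b : ℝ)
    (ha : 1 ≤ a) (hb : 1 ≤ b) (hp : ‖p‖ ≤ 1) (hq : ‖q‖ ≤ 1) (hap : a = 1 ∨ ‖p‖ = 1)
    (hbq : b = 1 ∨ ‖q‖ = 1) : ‖p - q‖ ≤ ‖a • p - b • q‖ := by
  have hpq : inner ℝ p q ≤ ‖p‖ * ‖q‖ := real_inner_le_norm p q
  have h1 : 0 ≤ (a - 1) * (‖p‖ ^ 2 - inner ℝ p q) := by
    rcases hap with h | h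
    · simp [h]
    · apply mul_nonneg (by linarith)
      rw [h] at hpq ⊢; linarith
  have h2 : 0 ≤ (b - 1) * (‖q‖ ^ 2 - inner ℝ p q) := by
    rcases hbq with h | h
    · simp [h]
    · apply mul_nonneg (by linarith)
      rw [h] at hpq ⊢; linarith
  have h3 : inner ℝ (p - q) (a • p - b • q) ≤ ‖p - q‖ * ‖a • p - b • q‖ := real_inner_le_norm _ _
  have h4 : inner ℝ (p - q) (a • p - b • q) - ‖p - q‖ ^ 2 =
      (a - 1) * (‖p‖ ^ 2 - inner ℝ p q) + (b - 1) * (‖q‖ ^ 2 - inner ℝ p q) := by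
    simp only [← real_inner_self_eq_norm_sq, inner_sub_left, inner_sub_right, inner_smul_right,
      real_inner_comm p q]
    ring
  by_contra! hc
  nlinarith [norm_nonneg (a • p - b • q), norm_nonneg (p - q)]

theorem LN_spec {n : ℕ} (x : Fin n → ℝ) : ∃ a : ℝ, 1 ≤ a ∧ x = a • LN x ∧ l2norm (LN x) ≤ 1 ∧
    (a = 1 ∨ l2norm (LN x) = 1) ∧ l2norm (LN x) ≤ l2norm x := by
  by_cases h : l2norm x ≤ 1
  · exact ⟨1, le_rfl, by simp [LN, h], by simp [LN, h], Or.inl rfl, by simp [LN, h]⟩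
  · have h0 : 0 < l2norm x := by linarith
    have e : l2norm (LN x) = 1 := by
      rw [LN, if_neg h, l2norm_eq ((l2norm x)⁻¹ • x), WithLp.toLp_smul, norm_smul, ← l2norm_eq,
        Real.norm_of_nonneg (by positivity)]
      field_simp
    refine ⟨l2norm x, by linarith, ?_, e.le, Or.inr e, by linarith⟩
    rw [LN, if_neg h, smul_smul, mul_inv_cancel₀ h0.ne', one_smul]

theorem LN_lip {n : ℕ} (x y : Fin n → ℝ) : l2norm (LN x - LN y) ≤ l2norm (x - y) := by
  obtain ⟨a, ha, hx, h1, h2, -⟩ := LN_spec x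
  obtain ⟨b, hb, hy, h3, h4, -⟩ := LN_spec y
  have := proj_aux (WithLp.toLp 2 (LN x)) (WithLp.toLp 2 (LN y)) a b ha hb
    (by rwa [← l2norm_eq]) (by rwa [← l2norm_eq]) (by rwa [← l2norm_eq]) (by rwa [← l2norm_eq])
  rw [← WithLp.toLp_smul, ← WithLp.toLp_smul, ← WithLp.toLp_sub, ← WithLp.toLp_sub, ← hx, ← hy,
    ← l2norm_eq, ← l2norm_eq] at this
  exact this

/-- **Lipschitz property of the feed-forward module** (Proposition 11.1 of
Zhang et al.). -/
theorem ffn_lipschitz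
    (d dF : ℕ) (hd : 0 < d) (hdF : 0 < dF)
    (σ : ℝ → ℝ) (hσ : LipschitzWith 1 σ) (hσ0 : σ 0 = 0)
    (x xt : Fin d → ℝ)
    (A₁ A₁tilde : Matrix (Fin d) (Fin dF) ℝ) (A₂ A₂tilde : Matrix (Fin dF) (Fin d) ℝ) :
    l2norm (ffn σ x A₁ A₂ - ffn σ xt A₁tilde A₂tilde) ≤
      frobNorm A₁ * frobNorm A₂ * l2norm (x - xt) +
      frobNorm (A₁ - A₁tilde) * frobNorm A₂ * l2norm xt +
      frobNorm A₁tilde * frobNorm (A₂ - A₂tilde) * l2norm xt := by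
  have hl : ∀ s t, |σ s - σ t| ≤ |s - t| := fun s t => by
    simpa [Real.dist_eq] using hσ.dist_le_mul s t
  obtain ⟨-, -, -, -, -, hLN⟩ := LN_spec xt
  set u := Matrix.vecMul (LN x) A₁ with hu
  set ut := Matrix.vecMul (LN xt) A₁tilde with hut
  have e1 : ffn σ x A₁ A₂ - ffn σ xt A₁tilde A₂tilde =
      Matrix.vecMul (fun i => σ (u i) - σ (ut i)) A₂ +
      Matrix.vecMul (fun i => σ (ut i)) (A₂ - A₂tilde) := by
    have : (fun i => σ (u i) - σ (ut i)) = (fun i => σ (u i)) - (fun i => σ (ut i)) := rfl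
    rw [this, Matrix.sub_vecMul, Matrix.vecMul_sub]
    simp only [ffn, ← hu, ← hut]
    abel
  have e2 : u - ut = Matrix.vecMul (LN x - LN xt) A₁ +
      Matrix.vecMul (LN xt) (A₁ - A₁tilde) := by
    rw [Matrix.sub_vecMul, Matrix.vecMul_sub]
    abel
  have b1 : l2norm (fun i => σ (u i) - σ (ut i)) ≤
      l2norm (x - xt) * frobNorm A₁ + l2norm xt * frobNorm (A₁ - A₁tilde) := by
    refine (l2norm_mono _ (u - ut) fun i => hl _ _).trans ?_
    rw [e2]
    refine (l2norm_add_le _ _).trans (add_le_add ?_ ?_)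
    · exact (l2norm_vecMul_le _ _).trans
        (mul_le_mul_of_nonneg_right (LN_lip _ _) (frobNorm_nonneg' _))
    · exact (l2norm_vecMul_le _ _).trans
        (mul_le_mul_of_nonneg_right hLN (frobNorm_nonneg' _))
  have b2 : l2norm (fun i => σ (ut i)) ≤ l2norm xt * frobNorm A₁tilde := by
    refine (l2norm_mono _ ut fun i => by simpa [hσ0] using hl (ut i) 0).trans ?_
    exact (l2norm_vecMul_le _ _).trans
        (mul_le_mul_of_nonneg_right hLN (frobNorm_nonneg' _))
  rw [e1]
  refine (l2norm_add_le _ _).trans ?_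
  have c1 := (l2norm_vecMul_le (fun i => σ (u i) - σ (ut i)) A₂).trans
    (mul_le_mul_of_nonneg_right b1 (frobNorm_nonneg' _))
  have c2 := (l2norm_vecMul_le (fun i => σ (ut i)) (A₂ - A₂tilde)).trans
    (mul_le_mul_of_nonneg_right b2 (frobNorm_nonneg' _))
  linarith
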